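/- Assume h satisfies the control condition: there exist K, γ₀ > 0 such that |d·h'(c·d)| ≤ K(h(d)+1) for all d > 0 and all c with |c−1| ≤ γ₀. The equation κ + h'(tⁿ) + (n−1)κ(1/n + ln t) = 0 has a unique solution t = λ̄ > 0. If 0 < λ < λ̄ and r is a minimizer of Î over 𝒜_λ, then r(R) = λR for all R ∈ [0,1]. -/

import Mathlib

open Real MeasureTheory Filter Set
open scoped ENNReal NNReal

noncomputable section

/-- Radial stored energy `Φ(q, v, …, v) = (κ/n)(qⁿ + (n−1)vⁿ) + h(q v^{n−1})`,
the restriction of `Φ(v₁,…,vₙ) = (κ/n)(v₁ⁿ+⋯+vₙⁿ) + h(v₁⋯vₙ)` to points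
`(q, v, …, v)`. -/
def Phi (n : ℕ) (κ : ℝ) (h : ℝ → ℝ) (q v : ℝ) : ℝ :=
  (κ / n) * (q ^ n + ((n : ℝ) - 1) * v ^ n) + h (q * v ^ (n - 1))

/-- `Φ_{,1}(q, v, …, v) = κ q^{n−1} + v^{n−1} h'(q v^{n−1})`. -/
def Phi1 (n : ℕ) (κ : ℝ) (h' : ℝ → ℝ) (q v : ℝ) : ℝ :=
  κ * q ^ (n - 1) + v ^ (n - 1) * h' (q * v ^ (n - 1))

/-- `Φ_{,2}(q, v, …, v) = κ v^{n−1} + q v^{n−2} h'(q v^{n−1})`. -/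
def Phi2 (n : ℕ) (κ : ℝ) (h' : ℝ → ℝ) (q v : ℝ) : ℝ :=
  κ * v ^ (n - 1) + q * v ^ (n - 2) * h' (q * v ^ (n - 1))

/-- Radial Cauchy stress `T(q,v) = v^{1−n} Φ_{,1}(q,v,…,v) = κ(q/v)^{n−1} + h'(q v^{n−1})`. -/
def Tstress (n : ℕ) (κ : ℝ) (h' : ℝ → ℝ) (q v : ℝ) : ℝ :=
  κ * (q / v) ^ (n - 1) + h' (q * v ^ (n - 1))

/-- The determinant function `δ(R) = r'(R) (r(R)/R)^{n−1}`. -/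
def del (n : ℕ) (r r' : ℝ → ℝ) (R : ℝ) : ℝ :=
  r' R * (r R / R) ^ (n - 1)

/-- Hypotheses on `h : (0,∞) → [0,∞)`: it is `C²` with derivative `h'` and second
derivative `h''`, `h'' > 0`, `h(d) → ∞` as `d → 0⁺`, `h(d)/d → ∞` as `d → ∞`,
`h'(d) → −∞` as `d → 0⁺` and `h'(d) → ∞` as `d → ∞`. -/
structure GoodH (h h' h'' : ℝ → ℝ) : Prop where
  nonneg : ∀ d : ℝ, 0 < d → 0 ≤ h d
  deriv1 : ∀ d : ℝ, 0 < d → HasDerivAt h (h' d) d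
  deriv2 : ∀ d : ℝ, 0 < d → HasDerivAt h' (h'' d) d
  cont2 : ContinuousOn h'' (Set.Ioi 0)
  hpp_pos : ∀ d : ℝ, 0 < d → 0 < h'' d
  lim_zero : Tendsto h (nhdsWithin 0 (Set.Ioi 0)) atTop
  lim_growth : Tendsto (fun d => h d / d) atTop atTop
  dlim_zero : Tendsto h' (nhdsWithin 0 (Set.Ioi 0)) atBot
  dlim_top : Tendsto h' atTop atTop

/-- `r ∈ C²((0,1])`, with `r, r' > 0` on `(0,1]`, solving the radial equilibrium
equation `(d/dR)[R^{n−1} Φ_{,1}(r(R))] = (n−1) R^{n−2} Φ_{,2}(r(R))`. -/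
structure RadialSol (n : ℕ) (κ : ℝ) (h' : ℝ → ℝ) (r r' r'' : ℝ → ℝ) : Prop where
  pos : ∀ R ∈ Set.Ioc (0:ℝ) 1, 0 < r R
  derivPos : ∀ R ∈ Set.Ioc (0:ℝ) 1, 0 < r' R
  hasDeriv : ∀ R ∈ Set.Ioc (0:ℝ) 1, HasDerivWithinAt r (r' R) (Set.Ioc 0 1) R
  hasDeriv2 : ∀ R ∈ Set.Ioc (0:ℝ) 1, HasDerivWithinAt r' (r'' R) (Set.Ioc 0 1) R
  cont2 : ContinuousOn r'' (Set.Ioc 0 1)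
  equil : ∀ R ∈ Set.Ioc (0:ℝ) 1,
    HasDerivWithinAt (fun s => s ^ (n - 1) * Phi1 n κ h' (r' s) (r s / s))
      (((n : ℝ) - 1) * R ^ (n - 2) * Phi2 n κ h' (r' R) (r R / R)) (Set.Ioc 0 1) R


/-- Modified radial stored energy
`Φ̂(q,v,…,v) = (κ/n)qⁿ + h(q v^{n−1}) + κ q v^{n−1}((n−1)/n + ln(v^{n−1}))`. -/
def PhiHat (n : ℕ) (κ : ℝ) (h : ℝ → ℝ) (q v : ℝ) : ℝ :=
  (κ / n) * q ^ n + h (q * v ^ (n - 1)) +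
    κ * (q * v ^ (n - 1)) * (((n : ℝ) - 1) / n + ((n : ℝ) - 1) * Real.log v)

/-- `Φ̂_{,1}(q,v,…,v) = κ q^{n−1} + v^{n−1} h'(q v^{n−1}) + κ v^{n−1}((n−1)/n + (n−1) ln v)`. -/
def PhiHat1 (n : ℕ) (κ : ℝ) (h' : ℝ → ℝ) (q v : ℝ) : ℝ :=
  κ * q ^ (n - 1) + v ^ (n - 1) * h' (q * v ^ (n - 1)) +
    κ * v ^ (n - 1) * (((n : ℝ) - 1) / n + ((n : ℝ) - 1) * Real.log v)

/-- `Φ̂_{,2}(q,v,…,v) = q v^{n−2}(h'(q v^{n−1}) + κ + κ(n−1)(1/n + ln v))`. -/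
def PhiHat2 (n : ℕ) (κ : ℝ) (h' : ℝ → ℝ) (q v : ℝ) : ℝ :=
  q * v ^ (n - 2) *
    (h' (q * v ^ (n - 1)) + κ + κ * (((n : ℝ) - 1) * (1 / n + Real.log v)))

/-- Modified radial Cauchy stress
`T̂(q,v) = κ(q/v)^{n−1} + h'(q v^{n−1}) + (n−1)κ(1/n + ln v)`. -/
def THat (n : ℕ) (κ : ℝ) (h' : ℝ → ℝ) (q v : ℝ) : ℝ :=
  κ * (q / v) ^ (n - 1) + h' (q * v ^ (n - 1)) +
    ((n : ℝ) - 1) * κ * (1 / n + Real.log v)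

/-- `r ∈ C²((0,1])`, with `r, r' > 0` on `(0,1]`, solving the modified radial
equilibrium equation `(d/dR)[R^{n−1} Φ̂_{,1}(r(R))] = (n−1) R^{n−2} Φ̂_{,2}(r(R))`. -/
structure ModRadialSol (n : ℕ) (κ : ℝ) (h' : ℝ → ℝ) (r r' r'' : ℝ → ℝ) : Prop where
  pos : ∀ R ∈ Set.Ioc (0:ℝ) 1, 0 < r R
  derivPos : ∀ R ∈ Set.Ioc (0:ℝ) 1, 0 < r' R
  hasDeriv : ∀ R ∈ Set.Ioc (0:ℝ) 1, HasDerivWithinAt r (r' R) (Set.Ioc 0 1) R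
  hasDeriv2 : ∀ R ∈ Set.Ioc (0:ℝ) 1, HasDerivWithinAt r' (r'' R) (Set.Ioc 0 1) R
  cont2 : ContinuousOn r'' (Set.Ioc 0 1)
  equil : ∀ R ∈ Set.Ioc (0:ℝ) 1,
    HasDerivWithinAt (fun s => s ^ (n - 1) * PhiHat1 n κ h' (r' s) (r s / s))
      (((n : ℝ) - 1) * R ^ (n - 2) * PhiHat2 n κ h' (r' R) (r R / R)) (Set.Ioc 0 1) R


/-- The admissible set `𝒜_λ`: `r ∈ W^{1,1}(0,1)` (absolutely continuous with
integrable derivative `r'`), `r(1) = λ`, `r' > 0` a.e. in `(0,1)` and `r(0) ≥ 0`. -/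
structure Adm (lam : ℝ) (r r' : ℝ → ℝ) : Prop where
  intg : IntegrableOn r' (Set.Ioc 0 1)
  ftc : ∀ R ∈ Set.Icc (0:ℝ) 1, r R = r 0 + ∫ t in Set.Ioc 0 R, r' t
  derivPos : ∀ᵐ R ∂(volume.restrict (Set.Ioc (0:ℝ) 1)), 0 < r' R
  bc : r 1 = lam
  c0 : 0 ≤ r 0

/-- The modified energy functional `Î`, valued in `EReal` (it is the integral of
`R^{n−1} Φ̂(r'(R), r(R)/R, …, r(R)/R)` minus `(κ(n−1)/n) λⁿ ln λ`, the integral being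
defined as the difference of the lower integrals of the positive and negative parts). -/
def IHatE (n : ℕ) (κ lam : ℝ) (h : ℝ → ℝ) (r r' : ℝ → ℝ) : EReal :=
  (((∫⁻ R in Set.Ioc (0:ℝ) 1,
      ENNReal.ofReal (R ^ (n - 1) * PhiHat n κ h (r' R) (r R / R))) : ℝ≥0∞) : EReal)
  - (((∫⁻ R in Set.Ioc (0:ℝ) 1,
      ENNReal.ofReal (-(R ^ (n - 1) * PhiHat n κ h (r' R) (r R / R)))) : ℝ≥0∞) : EReal)
  - ((κ * ((n : ℝ) - 1) / n * lam ^ n * Real.log lam : ℝ) : EReal)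


/-- A convex function lies above its tangent lines. -/
lemma ConvexOn.tangent_le {S : Set ℝ} {f : ℝ → ℝ} {f' x y : ℝ} (hf : ConvexOn ℝ S f)
    (hx : x ∈ S) (hy : y ∈ S) (hd : HasDerivAt f f' x) : f x + f' * (y - x) ≤ f y := by
  rcases lt_trichotomy x y with hxy | rfl | hxy
  · have := hf.le_slope_of_hasDerivAt hx hy hxy hd
    rw [slope_def_field, le_div_iff₀ (sub_pos.2 hxy)] at this
    linarith
  · simp
  · have := hf.slope_le_of_hasDerivAt hy hx hxy hd
    rw [slope_def_field, div_le_iff₀ (sub_pos.2 hxy)] at this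
    linarith

/-- The excess in Bernoulli's inequality `1 + n (x - 1) ≤ xⁿ`. -/
def bernoulliGap (n : ℕ) (x : ℝ) : ℝ := x ^ n - 1 - n * (x - 1)

lemma bernoulliGap_pos {n : ℕ} (hn : 2 ≤ n) {x : ℝ} (hx : 0 ≤ x) (hx1 : x ≠ 1) :
    0 < bernoulliGap n x := by
  have := one_add_mul_self_lt_rpow_one_add (s := x - 1) (by linarith) (sub_ne_zero.2 hx1)
    (p := n) (by exact_mod_cast hn)
  rw [Real.rpow_natCast, add_sub_cancel] at this
  unfold bernoulliGap
  linarith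

lemma bernoulliGap_nonneg {n : ℕ} (hn : 2 ≤ n) {x : ℝ} (hx : 0 ≤ x) : 0 ≤ bernoulliGap n x := by
  by_cases hx1 : x = 1
  · simp [bernoulliGap, hx1]
  · exact (bernoulliGap_pos hn hx hx1).le

/-- The modified stored energy is bounded below by an affine function of the determinant that
is exact at the homogeneous strain `(lam, …, lam)`. -/
lemma PhiHat_ge {n : ℕ} (hn : 2 ≤ n) {κ : ℝ} (hκ : 0 < κ) {h : ℝ → ℝ} {a lam q v : ℝ}
    (hconv : ConvexOn ℝ (Set.Ioi 0) h) (hlam : 0 < lam) (ha : HasDerivAt h a (lam ^ n))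
    (hq : 0 < q) (hv : 0 < v) :
    PhiHat n κ h lam lam
        + (κ + a + ((n : ℝ) - 1) * κ * (1 / n + Real.log lam)) * (q * v ^ (n - 1) - lam ^ n)
        + κ * lam ^ n / n * bernoulliGap n (q / lam) ≤ PhiHat n κ h q v := by
  obtain ⟨x, hx, rfl⟩ : ∃ x, 0 < x ∧ q = lam * x := ⟨q / lam, by positivity, by field_simp⟩
  obtain ⟨y, hy, rfl⟩ : ∃ y, 0 < y ∧ v = lam * y := ⟨v / lam, by positivity, by field_simp⟩
  obtain ⟨m, rfl⟩ : ∃ m, n = m + 1 := ⟨n - 1, by omega⟩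
  have htan := hconv.tangent_le (mem_Ioi.2 (pow_pos hlam _))
    (mem_Ioi.2 (by positivity : 0 < lam * x * (lam * y) ^ m)) ha
  have hu : 0 < y ^ m := pow_pos hy m
  have hlog : 0 ≤ y ^ m * (m * Real.log y) - y ^ m + 1 := by
    have := mul_le_mul_of_nonneg_left (Real.one_sub_inv_le_log_of_pos hu) hu.le
    rw [Real.log_pow, mul_sub, mul_inv_cancel₀ hu.ne'] at this
    linarith
  have hpos : 0 ≤ κ * lam ^ (m + 1) * x * (y ^ m * (m * Real.log y) - y ^ m + 1) := by positivity
  have hdiv : lam * x / lam = x := by field_simp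
  have hm : ((m : ℝ) + 1) ≠ 0 := by positivity
  unfold PhiHat bernoulliGap
  rw [hdiv, Real.log_mul hlam.ne' hy.ne', ← sub_nonneg]
  simp only [Nat.add_sub_cancel, ← pow_succ'] at htan ⊢
  push_cast
  refine (add_nonneg hpos (sub_nonneg.2 htan)).trans_eq ?_
  field_simp
  ring

namespace Adm

variable {lam : ℝ} {r r' : ℝ → ℝ}

lemma intervalIntegrable (hr : Adm lam r r') : IntervalIntegrable r' volume 0 1 :=
  (intervalIntegrable_iff_integrableOn_Ioc_of_le zero_le_one).2 hr.intg

lemma eq_intervalIntegral (hr : Adm lam r r') {R : ℝ} (hR : R ∈ Set.Icc (0 : ℝ) 1) :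
    r R = r 0 + ∫ t in (0 : ℝ)..R, r' t := by
  rw [hr.ftc R hR, intervalIntegral.integral_of_le hR.1]

lemma continuousOn (hr : Adm lam r r') : ContinuousOn r (Set.Icc 0 1) := by
  have := intervalIntegral.continuousOn_primitive_interval (a := 0) (b := 1) (μ := volume)
    (f := r') (by
      rw [uIcc_of_le zero_le_one, integrableOn_Icc_iff_integrableOn_Ioc]; exact hr.intg)
  rw [uIcc_of_le zero_le_one] at this
  exact (continuousOn_const.add this).congr fun R hR => hr.eq_intervalIntegral hR

lemma strictMonoOn (hr : Adm lam r r') : StrictMonoOn r (Set.Icc 0 1) := by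
  intro a ha b hb hab
  have hint : IntegrableOn r' (Set.Ioc a b) := hr.intg.mono_set (Ioc_subset_Ioc ha.1 hb.2)
  have hpos : ∀ᵐ R ∂(volume.restrict (Set.Ioc a b)), 0 < r' R :=
    ae_restrict_of_ae_restrict_of_subset (Ioc_subset_Ioc ha.1 hb.2) hr.derivPos
  have h0a : IntervalIntegrable r' volume 0 a :=
    hr.intervalIntegrable.mono_set (by
      rw [uIcc_of_le ha.1, uIcc_of_le zero_le_one]; exact Icc_subset_Icc_right ha.2)
  have hab' : IntervalIntegrable r' volume a b :=
    (intervalIntegrable_iff_integrableOn_Ioc_of_le hab.le).2 hint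
  have hI : 0 < ∫ t in a..b, r' t := by
    rw [intervalIntegral.integral_of_le hab.le,
      integral_pos_iff_support_of_nonneg_ae (hpos.mono fun _ h => h.le) hint]
    have : (volume.restrict (Set.Ioc a b)) (Function.support r')
        = (volume.restrict (Set.Ioc a b)) Set.univ :=
      measure_congr (hpos.mono fun x hx => by
        apply propext
        exact ⟨fun _ => trivial, fun _ => hx.ne'⟩)
    rw [this]
    simp [hab]
  rw [hr.eq_intervalIntegral ha, hr.eq_intervalIntegral hb,
    ← intervalIntegral.integral_add_adjacent_intervals h0a hab']
  linarith

lemma nonneg (hr : Adm lam r r') {R : ℝ} (hR : R ∈ Set.Icc (0 : ℝ) 1) : 0 ≤ r R :=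
  hr.c0.trans (hr.strictMonoOn.monotoneOn (left_mem_Icc.2 zero_le_one) hR hR.1)

lemma pos (hr : Adm lam r r') {R : ℝ} (hR : R ∈ Set.Ioc (0 : ℝ) 1) : 0 < r R :=
  hr.c0.trans_lt (hr.strictMonoOn (left_mem_Icc.2 zero_le_one) (Ioc_subset_Icc_self hR) hR.1)

lemma ae_hasDerivAt (hr : Adm lam r r') :
    ∀ᵐ R ∂(volume.restrict (Set.Ioc (0 : ℝ) 1)), HasDerivAt r (r' R) R := by
  rw [ae_restrict_iff' measurableSet_Ioc]
  have h1 : ∀ᵐ x : ℝ, x ≠ 1 := by simp [ae_iff, measure_singleton]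
  filter_upwards [hr.intervalIntegrable.ae_hasDerivAt_integral, h1] with R hR hR1 hmem
  rw [uIcc_of_le zero_le_one] at hR
  refine ((hR (Ioc_subset_Icc_self hmem) 0 (by simp)).const_add (r 0)).congr_of_eventuallyEq ?_
  filter_upwards [Icc_mem_nhds hmem.1 (lt_of_le_of_ne hmem.2 hR1)] with x hx
  exact hr.eq_intervalIntegral hx

lemma integrableOn_deriv_mul_pow (hr : Adm lam r r') (m : ℕ) :
    IntegrableOn (fun R => r' R * r R ^ m) (Set.Ioc 0 1) := by
  have := hr.intervalIntegrable.mul_continuousOn (g := fun R => r R ^ m) (by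
    rw [uIcc_of_le zero_le_one]; exact hr.continuousOn.pow m)
  exact (intervalIntegrable_iff_integrableOn_Ioc_of_le zero_le_one).1 this

/-- The deformed volume of the image of an admissible map is at most that of the ball of
radius `lam`. -/
lemma integral_deriv_mul_pow_le (hr : Adm lam r r') (m : ℕ) :
    ((m : ℝ) + 1) * ∫ R in Set.Ioc (0 : ℝ) 1, r' R * r R ^ m ≤ lam ^ (m + 1) := by
  have hmono : MonotoneOn (fun R => r R ^ (m + 1)) (uIcc 0 1) := by
    rw [uIcc_of_le zero_le_one]
    exact fun a ha b hb hab =>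
      pow_le_pow_left₀ (hr.nonneg ha) (hr.strictMonoOn.monotoneOn ha hb hab) _
  have hmem := hmono.intervalIntegral_deriv_mem_uIcc
  rw [uIcc_of_le (sub_nonneg.2 (hmono left_mem_uIcc right_mem_uIcc zero_le_one)),
    intervalIntegral.integral_of_le zero_le_one] at hmem
  have heq : ∫ R in Set.Ioc (0 : ℝ) 1, deriv (fun R => r R ^ (m + 1)) R
      = ∫ R in Set.Ioc (0 : ℝ) 1, ((m : ℝ) + 1) * (r' R * r R ^ m) := by
    refine integral_congr_ae (hr.ae_hasDerivAt.mono fun R hR => ?_)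
    refine (hR.pow (m + 1)).deriv.trans ?_
    push_cast
    ring
  rw [heq, integral_const_mul] at hmem
  have := pow_nonneg hr.c0 (m + 1)
  have hle := hmem.2
  simp only [hr.bc] at hle
  linarith

lemma aestronglyMeasurable_energy (hr : Adm lam r r') {n : ℕ} {κ : ℝ} {h : ℝ → ℝ}
    (hcont : ContinuousOn h (Set.Ioi 0)) :
    AEStronglyMeasurable (fun R => R ^ (n - 1) * PhiHat n κ h (r' R) (r R / R))
      (volume.restrict (Set.Ioc 0 1)) := by
  classical
  have hr'm : AEMeasurable r' (volume.restrict (Set.Ioc 0 1)) :=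
    hr.intg.aestronglyMeasurable.aemeasurable
  have hrm : AEMeasurable r (volume.restrict (Set.Ioc 0 1)) :=
    (hr.continuousOn.mono Ioc_subset_Icc_self).aemeasurable measurableSet_Ioc
  have hvm : AEMeasurable (fun R => r R / R) (volume.restrict (Set.Ioc 0 1)) :=
    hrm.div aemeasurable_id
  have hdm : AEMeasurable (fun R => r' R * (r R / R) ^ (n - 1)) (volume.restrict (Set.Ioc 0 1)) :=
    hr'm.mul (hvm.pow_const _)
  have hpw : Measurable ((Set.Ioi (0 : ℝ)).piecewise h fun _ => 0) :=
    hcont.measurable_piecewise continuousOn_const measurableSet_Ioi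
  have hhm : AEMeasurable (fun R => h (r' R * (r R / R) ^ (n - 1)))
      (volume.restrict (Set.Ioc 0 1)) := by
    refine (hpw.comp_aemeasurable hdm).congr ?_
    filter_upwards [hr.derivPos, ae_restrict_mem measurableSet_Ioc] with R hR hmem
    have : r' R * (r R / R) ^ (n - 1) ∈ Set.Ioi (0 : ℝ) :=
      mul_pos hR (pow_pos (div_pos (hr.pos hmem) hmem.1) _)
    simp [Set.piecewise_eq_of_mem _ _ _ this]
  unfold PhiHat
  exact ((aemeasurable_id.pow_const _).mul ((((hr'm.pow_const _).const_mul _).add hhm).add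
    ((hdm.const_mul _).mul ((hvm.log.const_mul _).const_add _)))).aestronglyMeasurable

end Adm

lemma EReal_lintegral_sub_eq_integral {α : Type*} [MeasurableSpace α] {μ : Measure α}
    {f : α → ℝ} (hf : Integrable f μ) :
    ((∫⁻ x, ENNReal.ofReal (f x) ∂μ : ℝ≥0∞) : EReal)
      - ((∫⁻ x, ENNReal.ofReal (-f x) ∂μ : ℝ≥0∞) : EReal) = ((∫ x, f x ∂μ : ℝ) : EReal) := by
  rw [integral_eq_lintegral_pos_part_sub_lintegral_neg_part hf, EReal.coe_sub,
    EReal.coe_ennreal_toReal, EReal.coe_ennreal_toReal]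
  exacts [hf.neg.lintegral_lt_top.ne, hf.lintegral_lt_top.ne]

/-- If `f` has an integrable minorant and its extended integral is bounded above by a real
number, then `f` is integrable. -/
lemma integrable_of_lintegral_sub_le {α : Type*} [MeasurableSpace α] {μ : Measure α}
    {f g : α → ℝ} (hf : AEStronglyMeasurable f μ) (hg : Integrable g μ) (hgf : g ≤ᵐ[μ] f)
    {c : ℝ} (hc : ((∫⁻ x, ENNReal.ofReal (f x) ∂μ : ℝ≥0∞) : EReal)
      - ((∫⁻ x, ENNReal.ofReal (-f x) ∂μ : ℝ≥0∞) : EReal) ≤ c) :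
    Integrable f μ := by
  have hN : ∫⁻ x, ENNReal.ofReal (-f x) ∂μ ≠ ⊤ := by
    refine ((lintegral_mono_ae ?_).trans_lt hg.neg.lintegral_lt_top).ne
    filter_upwards [hgf] with x hx
    exact ENNReal.ofReal_le_ofReal (neg_le_neg hx)
  have hP : ∫⁻ x, ENNReal.ofReal (f x) ∂μ ≠ ⊤ := by
    intro hP
    rw [hP, ← EReal.coe_ennreal_toReal hN, EReal.coe_ennreal_top, EReal.top_sub_coe] at hc
    exact (EReal.coe_lt_top c).not_ge hc
  refine ⟨hf, ?_⟩
  have habs : ∀ x, ‖f x‖ₑ = ENNReal.ofReal (f x) + ENNReal.ofReal (-f x) := by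
    intro x
    rw [Real.enorm_eq_ofReal_abs]
    rcases le_total 0 (f x) with hx | hx
    · simp [abs_of_nonneg hx, ENNReal.ofReal_of_nonpos (neg_nonpos.2 hx)]
    · simp [abs_of_nonpos hx, ENNReal.ofReal_of_nonpos hx]
  unfold HasFiniteIntegral
  simp_rw [habs]
  rw [lintegral_add_left' hf.aemeasurable.ennreal_ofReal]
  exact ENNReal.add_lt_top.2 ⟨hP.lt_top, hN.lt_top⟩

/-- The homogeneous deformation is admissible. -/
lemma adm_homogeneous {lam : ℝ} (hlam : 0 < lam) : Adm lam (fun R => lam * R) fun _ => lam where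
  intg := integrableOn_const (by simp)
  ftc := fun R hR => by simp [hR.1, mul_comm]
  derivPos := .of_forall fun _ => hlam
  bc := mul_one _
  c0 := by simp

lemma integral_pow_Ioc (m : ℕ) : ∫ R in Set.Ioc (0 : ℝ) 1, R ^ m = 1 / ((m : ℝ) + 1) := by
  rw [← intervalIntegral.integral_of_le zero_le_one, integral_pow]
  simp

lemma integrableOn_pow_Ioc (m : ℕ) : IntegrableOn (fun R : ℝ => R ^ m) (Set.Ioc 0 1) :=
  (continuous_pow m).integrableOn_Ioc

namespace GoodH

variable {h h' h'' : ℝ → ℝ}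

lemma strictMonoOn_deriv (hh : GoodH h h' h'') : StrictMonoOn h' (Set.Ioi 0) := by
  refine strictMonoOn_of_deriv_pos (convex_Ioi 0)
    (fun d hd => (hh.deriv2 d hd).continuousAt.continuousWithinAt) fun d hd => ?_
  rw [interior_Ioi] at hd
  rw [(hh.deriv2 d hd).deriv]
  exact hh.hpp_pos d hd

/-- The modified Cauchy stress of homogeneous deformations is strictly increasing. -/
lemma strictMonoOn_stress (hh : GoodH h h' h'') {n : ℕ} (hn : 2 ≤ n) {κ : ℝ} (hκ : 0 < κ) :
    StrictMonoOn (fun t : ℝ => κ + h' (t ^ n) + ((n : ℝ) - 1) * κ * (1 / n + Real.log t))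
      (Set.Ioi 0) := by
  intro a ha b hb hab
  have hn1 : (0 : ℝ) < n - 1 := by
    have : (2 : ℝ) ≤ n := by exact_mod_cast hn
    linarith
  have hpow := hh.strictMonoOn_deriv (mem_Ioi.2 (pow_pos ha n)) (mem_Ioi.2 (pow_pos hb n))
    (pow_lt_pow_left₀ hab (le_of_lt ha) (by omega))
  have hlog := mul_lt_mul_of_pos_left (Real.log_lt_log ha hab) (mul_pos hn1 hκ)
  simp only [mul_add]
  linarith

lemma existsUnique_stress_eq_zero (hh : GoodH h h' h'') {n : ℕ} (hn : 2 ≤ n) {κ : ℝ}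
    (hκ : 0 < κ) :
    ∃! t : ℝ, 0 < t ∧ κ + h' (t ^ n) + ((n : ℝ) - 1) * κ * (1 / n + Real.log t) = 0 := by
  have hmono := hh.strictMonoOn_stress hn hκ
  have hn0 : n ≠ 0 := by omega
  have hn1 : (0 : ℝ) < n - 1 := by
    have : (2 : ℝ) ≤ n := by exact_mod_cast hn
    linarith
  have hcont : ContinuousOn
      (fun t : ℝ => κ + h' (t ^ n) + ((n : ℝ) - 1) * κ * (1 / n + Real.log t)) (Set.Ioi 0) := by
    refine ContinuousOn.add (continuousOn_const.add ?_)
      (continuousOn_const.mul (continuousOn_const.add ?_))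
    · exact ContinuousOn.comp (t := Set.Ioi 0)
        (fun d hd => (hh.deriv2 d hd).continuousAt.continuousWithinAt)
        (continuousOn_pow n) fun t ht => mem_Ioi.2 (pow_pos (mem_Ioi.1 ht) n)
    · exact Real.continuousOn_log.mono fun t ht => ne_of_gt ht
  have hpow0 : Tendsto (fun t : ℝ => t ^ n) (nhdsWithin 0 (Set.Ioi 0))
      (nhdsWithin 0 (Set.Ioi 0)) := by
    refine tendsto_nhdsWithin_iff.2 ⟨?_,
      eventually_nhdsWithin_of_forall fun t ht => mem_Ioi.2 (pow_pos (mem_Ioi.1 ht) n)⟩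
    have := ((continuous_pow n).tendsto (0 : ℝ)).mono_left
      (nhdsWithin_le_nhds (s := Set.Ioi 0))
    rwa [zero_pow hn0] at this
  have hbot : Tendsto (fun t : ℝ => κ + h' (t ^ n) + ((n : ℝ) - 1) * κ * (1 / n + Real.log t))
      (nhdsWithin 0 (Set.Ioi 0)) atBot :=
    (tendsto_atBot_add_const_left _ κ (hh.dlim_zero.comp hpow0)).atBot_add_atBot
      ((tendsto_atBot_add_const_left _ (1 / (n : ℝ)) Real.tendsto_log_nhdsGT_zero).const_mul_atBot
        (mul_pos hn1 hκ))
  have htop : Tendsto (fun t : ℝ => κ + h' (t ^ n) + ((n : ℝ) - 1) * κ * (1 / n + Real.log t))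
      atTop atTop :=
    (tendsto_atTop_add_const_left _ κ
      (hh.dlim_top.comp (tendsto_pow_atTop hn0))).atTop_add_atTop
      ((tendsto_atTop_add_const_left _ (1 / (n : ℝ)) Real.tendsto_log_atTop).const_mul_atTop
        (mul_pos hn1 hκ))
  obtain ⟨a, ha, ha0⟩ := ((hbot.eventually_le_atBot 0).and self_mem_nhdsWithin).exists
  obtain ⟨b, hb, hab⟩ := ((htop.eventually_ge_atTop 0).and (eventually_ge_atTop a)).exists
  obtain ⟨t, ht, ht0⟩ := intermediate_value_Icc hab
    (hcont.mono fun x hx => mem_Ioi.2 (lt_of_lt_of_le ha0 hx.1)) ⟨ha, hb⟩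
  have htpos : 0 < t := lt_of_lt_of_le ha0 ht.1
  exact ⟨t, ⟨htpos, ht0⟩, fun s hs => hmono.injOn (mem_Ioi.2 hs.1) (mem_Ioi.2 htpos)
    (hs.2.trans ht0.symm)⟩

end GoodH

/-- If the homogeneous stress at `lam` is negative, every admissible map whose energy does not
exceed that of the homogeneous deformation has derivative `lam` almost everywhere. -/
lemma Adm.ae_deriv_eq_of_energy_le {n : ℕ} (hn : 2 ≤ n) {κ : ℝ} (hκ : 0 < κ) {h : ℝ → ℝ}
    {a lam : ℝ} {r r' : ℝ → ℝ} (hconv : ConvexOn ℝ (Set.Ioi 0) h) (hlam : 0 < lam)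
    (ha : HasDerivAt h a (lam ^ n))
    (hT : κ + a + ((n : ℝ) - 1) * κ * (1 / n + Real.log lam) < 0) (hr : Adm lam r r')
    (hle : IHatE n κ lam h r r' ≤ IHatE n κ lam h (fun R => lam * R) fun _ => lam) :
    ∀ᵐ R ∂(volume.restrict (Set.Ioc (0 : ℝ) 1)), r' R = lam := by
  obtain ⟨m, rfl⟩ : ∃ m, n = m + 1 := ⟨n - 1, by omega⟩
  set T := κ + a + (((m + 1 : ℕ) : ℝ) - 1) * κ * (1 / (m + 1 : ℕ) + Real.log lam) with hTdef
  set E := PhiHat (m + 1) κ h lam lam with hE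
  set F : ℝ → ℝ := fun R => R ^ m * PhiHat (m + 1) κ h (r' R) (r R / R) with hF
  set L : ℝ → ℝ := fun R => (E - T * lam ^ (m + 1)) * R ^ m + T * (r' R * r R ^ m) with hL
  set μ := volume.restrict (Set.Ioc (0 : ℝ) 1) with hμ
  have hLint : Integrable L μ :=
    ((integrableOn_pow_Ioc m).const_mul _).add ((hr.integrableOn_deriv_mul_pow m).const_mul _)
  have hLge : E / (m + 1) ≤ ∫ R, L R ∂μ := by
    have hvol := hr.integral_deriv_mul_pow_le m
    have hm : (0 : ℝ) < m + 1 := by positivity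
    rw [hL, integral_add ((integrableOn_pow_Ioc m).const_mul _)
      ((hr.integrableOn_deriv_mul_pow m).const_mul _), integral_const_mul, integral_const_mul,
      integral_pow_Ioc, div_le_iff₀ hm]
    have := mul_le_mul_of_nonpos_left hvol hT.le
    have hcancel : (1 / ((m : ℝ) + 1)) * (m + 1) = 1 := by field_simp
    linear_combination this - (E - T * lam ^ (m + 1)) * hcancel
  have hpt : ∀ᵐ R ∂μ, L R + R ^ m * (κ * lam ^ (m + 1) / (m + 1 : ℕ) *
      bernoulliGap (m + 1) (r' R / lam)) ≤ F R := by
    filter_upwards [hr.derivPos, ae_restrict_mem measurableSet_Ioc] with R hR hmem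
    have hRm : 0 < R ^ m := pow_pos hmem.1 m
    refine le_of_eq_of_le ?_ (mul_le_mul_of_nonneg_left
      (PhiHat_ge hn hκ hconv hlam ha hR (div_pos (hr.pos hmem) hmem.1)) hRm.le)
    simp only [hL, Nat.add_sub_cancel, div_pow, ← hTdef, ← hE]
    field_simp
    ring
  have hLF : L ≤ᵐ[μ] F := by
    filter_upwards [hpt, hr.derivPos, ae_restrict_mem measurableSet_Ioc] with R hR hpos hmem
    refine le_trans (le_add_of_nonneg_right ?_) hR
    have := bernoulliGap_nonneg hn (div_pos hpos hlam).le
    have := pow_pos hmem.1 m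
    positivity
  have hhom : (∫⁻ R, ENNReal.ofReal (R ^ m * PhiHat (m + 1) κ h lam (lam * R / R)) ∂μ : EReal)
      - (∫⁻ R, ENNReal.ofReal (-(R ^ m * PhiHat (m + 1) κ h lam (lam * R / R))) ∂μ : EReal)
      = ((E / (m + 1) : ℝ) : EReal) := by
    have hcongr : (fun R => R ^ m * PhiHat (m + 1) κ h lam (lam * R / R))
        =ᵐ[μ] fun R => E * R ^ m := by
      filter_upwards [ae_restrict_mem measurableSet_Ioc] with R hmem
      rw [mul_div_assoc, div_self hmem.1.ne', mul_one, mul_comm]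
    rw [EReal_lintegral_sub_eq_integral
      (((integrableOn_pow_Ioc m).const_mul E).congr hcongr.symm), integral_congr_ae hcongr,
      integral_const_mul, integral_pow_Ioc, mul_one_div]
  have hEle : (∫⁻ R, ENNReal.ofReal (F R) ∂μ : EReal) - (∫⁻ R, ENNReal.ofReal (-F R) ∂μ : EReal)
      ≤ ((E / (m + 1) : ℝ) : EReal) := by
    rw [← hhom]
    have := add_le_add_left hle
      ((κ * (((m + 1 : ℕ) : ℝ) - 1) / (m + 1 : ℕ) * lam ^ (m + 1) * Real.log lam : ℝ) : EReal)
    simpa only [IHatE, EReal.sub_add_cancel, Nat.add_sub_cancel] using this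
  have hcont : ContinuousOn h (Set.Ioi 0) := hconv.continuousOn isOpen_Ioi
  have hFint : Integrable F μ :=
    integrable_of_lintegral_sub_le (hr.aestronglyMeasurable_energy (n := m + 1) hcont) hLint hLF hEle
  rw [EReal_lintegral_sub_eq_integral hFint, EReal.coe_le_coe_iff] at hEle
  have hLFeq : L =ᵐ[μ] F :=
    (integral_eq_iff_of_ae_le hLint hFint hLF).1
      (le_antisymm (integral_mono_ae hLint hFint hLF) (hEle.trans hLge))
  filter_upwards [hpt, hLFeq, hr.derivPos, ae_restrict_mem measurableSet_Ioc]
    with R hR heq hpos hmem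
  by_contra hne
  have hgap := bernoulliGap_pos hn (div_pos hpos hlam).le
    (fun h1 => hne ((div_eq_one_iff_eq hlam.ne').1 h1))
  have hRm := pow_pos hmem.1 m
  have : 0 < R ^ m * (κ * lam ^ (m + 1) / (m + 1 : ℕ) * bernoulliGap (m + 1) (r' R / lam)) := by
    positivity
  linarith

/-- the equation `κ + h'(tⁿ) + (n−1)κ(1/n + ln t) = 0` has a unique
positive solution `λ̄`, and for `0 < λ < λ̄` any minimizer of `Î` over `𝒜_λ` is the
homogeneous deformation `r(R) = λR`. -/
theorem stmt15 (n : ℕ) (hn : 2 ≤ n) (κ : ℝ) (hκ : 0 < κ)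
    (h h' h'' : ℝ → ℝ) (hh : GoodH h h' h'') (hconv : ConvexOn ℝ (Set.Ioi 0) h)
    (K γ₀ : ℝ) (hK : 0 < K) (hγ₀ : 0 < γ₀)
    (hctrl : ∀ d : ℝ, 0 < d → ∀ c : ℝ, |c - 1| ≤ γ₀ → |d * h' (c * d)| ≤ K * (h d + 1))
    (lam : ℝ) (hlam : 0 < lam) :
    (∃! t : ℝ, 0 < t ∧ κ + h' (t ^ n) + ((n:ℝ) - 1) * κ * (1 / n + Real.log t) = 0) ∧
    (∀ lamBar : ℝ, 0 < lamBar →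
      κ + h' (lamBar ^ n) + ((n:ℝ) - 1) * κ * (1 / n + Real.log lamBar) = 0 →
      lam < lamBar →
      ∀ r r' : ℝ → ℝ, Adm lam r r' →
        (∀ s s' : ℝ → ℝ, Adm lam s s' → IHatE n κ lam h r r' ≤ IHatE n κ lam h s s') →
        ∀ R ∈ Set.Icc (0:ℝ) 1, r R = lam * R) := by
  refine ⟨hh.existsUnique_stress_eq_zero hn hκ, ?_⟩
  intro lamBar hBar hBarEq hlt r r' hr hmin R hR
  have hT : κ + h' (lam ^ n) + ((n : ℝ) - 1) * κ * (1 / n + Real.log lam) < 0 :=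
    (hh.strictMonoOn_stress hn hκ hlam hBar hlt).trans_eq hBarEq
  have hae := hr.ae_deriv_eq_of_energy_le hn hκ hconv hlam (hh.deriv1 _ (pow_pos hlam n)) hT
    (hmin _ _ (adm_homogeneous hlam))
  have haffine : ∀ S ∈ Set.Icc (0 : ℝ) 1, r S = r 0 + lam * S := by
    intro S hS
    have : ∫ t in Set.Ioc 0 S, r' t = ∫ _ in Set.Ioc 0 S, lam :=
      integral_congr_ae
        (ae_restrict_of_ae_restrict_of_subset (Ioc_subset_Ioc_right hS.2) hae)
    rw [hr.ftc S hS, this]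
    simp [hS.1, mul_comm]
  have h1 := haffine 1 (right_mem_Icc.2 zero_le_one)
  rw [hr.bc] at h1
  rw [haffine R hR]
  linarith

end
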